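/- Let q be an odd integer ≥ 3, r the multiplicative order of 2 modulo q, and let q₂ = 1 if 2 is a square modulo q and q₂ = 0 otherwise. Then the number of semi-bad classes modulo q is |E'(q)| = 2^{ω(q)}·(⌊(r+1)/2⌋ + q₂·⌊r/2⌋) − r, where ω(q) is the number of distinct prime factors of q. -/

import Mathlib

/-!
Every bad class has a bad square, so `E'(q)` is `S \ E(q)` with `S = {x | x ^ 2 ∈ E(q)}`, and
`E(q)` has `r` elements. Squaring sorts `S` into fibres over the powers `2 ^ i`, `i < r`. A fibre
over a unit is empty or a translate of `{x | x ^ 2 = 1}`; the latter has `2 ^ ω(q)` elements, by the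
Chinese remainder theorem and because modulo an odd prime power the only square roots of `1` are
`±1` (`card_sqrt_one`). It remains to count the `i < r` for which `2 ^ i` is a square: all of them if
`2` is a square; otherwise exactly the even ones, and then `r` is even, since for odd `r` the class
`2 = 2 ^ (r + 1)` would be a square (`sum_card_fibre`).
-/

/-- The set `E(q)` of bad classes: the powers `2^i`, `0 ≤ i ≤ r - 1`, in `ℤ/qℤ`,
where `r` is the multiplicative order of `2` modulo `q`. -/
def badE (q : ℕ) : Set (ZMod q) := {x | ∃ i < orderOf (2 : ZMod q), x = 2 ^ i}

/-- A class of `(ℤ/qℤ)*` is semi-bad if it does not belong to `E(q)` but its square does. -/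
def SemiBad (q : ℕ) (x : ZMod q) : Prop := IsUnit x ∧ x ∉ badE q ∧ x ^ 2 ∈ badE q

/-- The set `E'(q)` of semi-bad classes. -/
def semiBadE (q : ℕ) : Set (ZMod q) := {x | SemiBad q x}

/-- An odd prime cannot divide both `x - 1` and `x + 1`, so `p ^ k ∣ (x - 1) * (x + 1)` forces
`p ^ k` to divide one of the two factors. -/
lemma sq_eq_one_iff_of_prime_pow (p k : ℕ) (hp : p.Prime) (hp2 : p ≠ 2) (x : ZMod (p ^ k)) :
    x ^ 2 = 1 ↔ x = 1 ∨ x = -1 := by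
  constructor
  · intro h
    obtain ⟨a, rfl⟩ := ZMod.intCast_surjective x
    have hdvd : ((p ^ k : ℕ) : ℤ) ∣ (a - 1) * (a + 1) := by
      rw [← ZMod.intCast_zmod_eq_zero_iff_dvd]
      push_cast
      linear_combination h
    have hpZ : Prime (p : ℤ) := Nat.prime_iff_prime_int.mp hp
    push_cast at hdvd
    have key : ((p : ℤ) ^ k ∣ a - 1) ∨ ((p : ℤ) ^ k ∣ a + 1) := by
      by_cases h1 : (p : ℤ) ∣ a - 1
      · left
        have h2 : ¬ (p : ℤ) ∣ a + 1 := by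
          intro h2
          have h3 : (p : ℤ) ∣ 2 := by
            have := dvd_sub h2 h1
            ring_nf at this
            exact this
          have h4 : p ∣ 2 := by exact_mod_cast h3
          exact hp2 ((Nat.prime_dvd_prime_iff_eq hp Nat.prime_two).mp h4)
        exact (IsCoprime.pow_left ((hpZ.coprime_iff_not_dvd).mpr h2)).dvd_of_dvd_mul_right hdvd
      · right
        exact (IsCoprime.pow_left ((hpZ.coprime_iff_not_dvd).mpr h1)).dvd_of_dvd_mul_left hdvd
    rcases key with h | h
    · left
      have : ((a - 1 : ℤ) : ZMod (p ^ k)) = 0 := by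
        rw [ZMod.intCast_zmod_eq_zero_iff_dvd]; exact_mod_cast h
      push_cast at this
      linear_combination this
    · right
      have : ((a + 1 : ℤ) : ZMod (p ^ k)) = 0 := by
        rw [ZMod.intCast_zmod_eq_zero_iff_dvd]; exact_mod_cast h
      push_cast at this
      linear_combination this
  · rintro (rfl | rfl) <;> ring

lemma card_sqrt_one (q : ℕ) : Odd q →
    Nat.card {x : ZMod q // x ^ 2 = 1} = 2 ^ q.primeFactors.card := by
  induction q using Nat.recOnPosPrimePosCoprime with
  | zero => intro h; simp at h
  | one =>
    intro _
    have : Unique {x : ZMod 1 // x ^ 2 = 1} :=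
      { default := ⟨1, by simp⟩, uniq := fun a => Subsingleton.elim _ _ }
    simp
  | prime_pow p n hp hn =>
    intro hodd
    have hp2 : p ≠ 2 := by
      rintro rfl
      rw [Nat.odd_pow_iff hn.ne'] at hodd
      exact absurd hodd (by decide)
    have h3 : 2 < p ^ n :=
      lt_of_lt_of_le (lt_of_le_of_ne hp.two_le hp2.symm) (Nat.le_self_pow hn.ne' p)
    have : Fact (2 < p ^ n) := ⟨h3⟩
    have hset : {x : ZMod (p ^ n) | x ^ 2 = 1} = {1, -1} := by
      ext x
      simpa using sq_eq_one_iff_of_prime_pow p n hp hp2 x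
    have hc : Nat.card {x : ZMod (p ^ n) // x ^ 2 = 1}
        = ({x : ZMod (p ^ n) | x ^ 2 = 1}).ncard := rfl
    rw [hc, hset, Set.ncard_pair ZMod.neg_one_ne_one.symm, Nat.primeFactors_prime_pow hn.ne' hp]
    simp
  | coprime a b ha hb hab iha ihb =>
    intro hodd
    rw [Nat.odd_mul] at hodd
    rw [hab.primeFactors_mul, Finset.card_union_of_disjoint hab.disjoint_primeFactors, pow_add,
      ← iha hodd.1, ← ihb hodd.2, ← Nat.card_prod]
    refine Nat.card_congr (Equiv.trans ?_ (Equiv.subtypeProdEquivProd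
      (p := fun x : ZMod a => x ^ 2 = 1) (q := fun x : ZMod b => x ^ 2 = 1)))
    refine Equiv.subtypeEquiv (ZMod.chineseRemainder hab).toEquiv fun x => ?_
    rw [← (ZMod.chineseRemainder hab).injective.eq_iff, map_pow, map_one, Prod.ext_iff]
    rfl

open scoped Classical in
/-- A square root `y` of a unit `c` carries the square roots of `1` onto those of `c`. -/
lemma card_sqrt_unit (q : ℕ) [NeZero q] (hodd : Odd q) (c : ZMod q) (hc : IsUnit c) :
    (Finset.univ.filter fun x : ZMod q => x ^ 2 = c).card =
      if ∃ y : ZMod q, y ^ 2 = c then 2 ^ q.primeFactors.card else 0 := by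
  split_ifs with h
  · obtain ⟨y, hy⟩ := h
    have hyu : IsUnit y := by
      rw [← hy] at hc
      exact (isUnit_pow_iff two_ne_zero).mp hc
    obtain ⟨u, rfl⟩ := hyu
    rw [← card_sqrt_one q hodd, Nat.card_eq_fintype_card, Fintype.card_subtype]
    symm
    refine Finset.card_equiv (Units.mulLeft u) fun x => ?_
    simp only [Finset.mem_filter, Finset.mem_univ, true_and, Units.mulLeft_apply]
    rw [← hy, mul_pow]
    constructor
    · intro h; rw [h, mul_one]
    · intro h
      exact (hc.mul_left_cancel (by rw [← hy, h, mul_one]))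
  · rw [Finset.card_eq_zero, Finset.filter_eq_empty_iff]
    exact fun x _ hx => h ⟨x, hx⟩

open scoped Classical in
lemma sum_card_fibre (q : ℕ) [NeZero q] (hodd : Odd q) (h2 : IsUnit (2 : ZMod q)) :
    ∑ i ∈ Finset.range (orderOf (2 : ZMod q)),
        (Finset.univ.filter fun x : ZMod q => x ^ 2 = 2 ^ i).card =
      2 ^ q.primeFactors.card * ((orderOf (2 : ZMod q) + 1) / 2 +
        (if ∃ x : ZMod q, x ^ 2 = 2 then 1 else 0) * (orderOf (2 : ZMod q) / 2)) := by
  rw [Finset.sum_congr rfl fun i _ => card_sqrt_unit q hodd (2 ^ i) (h2.pow i)]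
  by_cases hsq : ∃ x : ZMod q, x ^ 2 = 2
  · have hall : ∀ i : ℕ, ∃ y : ZMod q, y ^ 2 = 2 ^ i := by
      obtain ⟨x, hx⟩ := hsq
      exact fun i => ⟨x ^ i, by rw [← pow_mul, mul_comm, pow_mul, hx]⟩
    simp only [hall, hsq, if_true, Finset.sum_const, Finset.card_range, smul_eq_mul]
    rw [mul_comm]
    congr 1
    omega
  · have hiff : ∀ i : ℕ, (∃ y : ZMod q, y ^ 2 = 2 ^ i) ↔ Even i := by
      intro i
      constructor
      · rintro ⟨y, hy⟩
        by_contra hi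
        obtain ⟨k, rfl⟩ := Nat.not_even_iff_odd.mp hi
        -- `y / 2 ^ k` would be a square root of `2`.
        obtain ⟨u, hu⟩ := h2.pow k
        refine hsq ⟨y * ↑u⁻¹, ?_⟩
        have hu1 : (2 : ZMod q) ^ k * ↑u⁻¹ = 1 := by rw [← hu]; simp
        calc (y * ↑u⁻¹) ^ 2 = 2 * (2 ^ k * ↑u⁻¹) ^ 2 := by rw [mul_pow, hy]; ring
          _ = 2 := by rw [hu1]; ring
      · rintro ⟨k, rfl⟩
        exact ⟨2 ^ k, by ring⟩
    have hr : Even (orderOf (2 : ZMod q)) := by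
      by_contra hr
      obtain ⟨k, hk⟩ := Nat.not_even_iff_odd.mp hr
      refine hsq ⟨2 ^ (k + 1), ?_⟩
      have := pow_orderOf_eq_one (2 : ZMod q)
      rw [hk] at this
      calc ((2 : ZMod q) ^ (k + 1)) ^ 2 = 2 ^ (2 * k + 1) * 2 := by ring
        _ = 2 := by rw [this, one_mul]
    simp only [hiff, hsq, if_false, zero_mul, add_zero]
    obtain ⟨m, hm⟩ := hr
    rw [hm, show (m + m + 1) / 2 = m by omega]
    clear hm
    induction m with
    | zero => simp
    | succ m ih =>
      rw [show m + 1 + (m + 1) = m + m + 1 + 1 by ring, Finset.sum_range_succ,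
        Finset.sum_range_succ, ih, if_pos ⟨m, rfl⟩, if_neg (by simp [parity_simps])]
      ring

/- `|E'(q)| = 2^{ω(q)}·(⌊(r+1)/2⌋ + q₂·⌊r/2⌋) − r`, where `q₂ = 1` if `2` is a square
modulo `q` and `q₂ = 0` otherwise, and `ω(q)` is the number of distinct prime factors
of `q`. (Stated in `ℤ`; the natural-number divisions are the floors.) -/
open scoped Classical in
theorem stmt2 (q : ℕ) (hq : 3 ≤ q) (hodd : Odd q) :
    ((semiBadE q).ncard : ℤ) =
      2 ^ q.primeFactors.card *
          (((orderOf (2 : ZMod q) + 1) / 2 : ℕ) +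
            (if ∃ x : ZMod q, x ^ 2 = 2 then (1 : ℤ) else 0) *
              ((orderOf (2 : ZMod q) / 2 : ℕ) : ℤ))
        - (orderOf (2 : ZMod q) : ℤ) := by
  have : NeZero q := ⟨by omega⟩
  have h2 : IsUnit (2 : ZMod q) := by
    have := (ZMod.isUnit_iff_coprime 2 q).mpr (Nat.coprime_two_left.mpr hodd)
    exact_mod_cast this
  have hpos : 0 < orderOf (2 : ZMod q) := by
    obtain ⟨u, hu⟩ := h2
    rw [← hu, orderOf_units]
    exact orderOf_pos u
  have hinj : Set.InjOn (fun i : ℕ => (2 : ZMod q) ^ i)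
      (Finset.range (orderOf (2 : ZMod q)) : Set ℕ) := by
    rw [Finset.coe_range]
    exact pow_injOn_Iio_orderOf
  set B : Finset (ZMod q) := (Finset.range (orderOf (2 : ZMod q))).image fun i => 2 ^ i with hB
  have hmem : ∀ x, x ∈ B ↔ x ∈ badE q := by
    intro x
    simp [hB, badE, eq_comm]
  have hpow : ∀ n : ℕ, (2 : ZMod q) ^ n ∈ B := fun n =>
    (hmem _).mpr ⟨n % orderOf (2 : ZMod q), Nat.mod_lt _ hpos, (pow_mod_orderOf _ _).symm⟩
  have hBcard : B.card = orderOf (2 : ZMod q) := by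
    rw [hB, Finset.card_image_of_injOn hinj, Finset.card_range]
  set S : Finset (ZMod q) := Finset.univ.filter fun x => x ^ 2 ∈ B with hS
  have hBS : B ⊆ S := by
    intro x hx
    obtain ⟨i, -, rfl⟩ := (hmem x).mp hx
    rw [hS, Finset.mem_filter, ← pow_mul]
    exact ⟨Finset.mem_univ _, hpow _⟩
  have hE : semiBadE q = ((S \ B : Finset (ZMod q)) : Set (ZMod q)) := by
    ext x
    simp only [semiBadE, SemiBad, Set.mem_ofPred_eq, Finset.coe_sdiff, Set.mem_sdiff,
      Finset.mem_coe, hS, Finset.mem_filter, Finset.mem_univ, true_and, hmem]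
    constructor
    · rintro ⟨-, h, hs⟩
      exact ⟨hs, h⟩
    · rintro ⟨hs, h⟩
      refine ⟨?_, h, hs⟩
      -- A class whose square is a power of `2` is automatically invertible.
      obtain ⟨i, -, hi⟩ := hs
      exact (isUnit_pow_iff two_ne_zero).mp (hi ▸ h2.pow i)
  have hScard : S.card = ∑ i ∈ Finset.range (orderOf (2 : ZMod q)),
      (Finset.univ.filter fun x : ZMod q => x ^ 2 = 2 ^ i).card := by
    rw [Finset.card_eq_sum_card_fiberwise (s := S) (f := fun x => x ^ 2) (t := B)
      (fun x hx => (Finset.mem_filter.mp (Finset.mem_coe.mp hx)).2), hB, Finset.sum_image hinj]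
    refine Finset.sum_congr rfl fun i _ => ?_
    congr 1
    ext x
    simp only [hS, Finset.mem_filter, Finset.mem_univ, true_and, and_iff_right_iff_imp]
    intro hx
    rw [hx]
    exact hpow i
  rw [hE, Set.ncard_coe_finset, Finset.card_sdiff_of_subset hBS,
    Nat.cast_sub (Finset.card_le_card hBS), hBcard, hScard, sum_card_fibre q hodd h2]
  push_cast
  congr!
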